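/- arXiv:math/0306375 — 2 statements merged into one kernel-verified Lean document; each statement's English description precedes it below -/
import Mathlib

section
/- For every open set U ⊆ 𝔻 containing the disc B(0, e^{−π}) and with 0 ∈ U, there exists a finite or countable family of points (w_i)_{i∈I} with Re w_i < 0 and e^{w_i} ∈ 𝔻 \ U such that the triangles T(w_i) are pairwise disjoint in the quotient ℂ/2πiℤ and the area in the quotient of ⋃_{Re w < 0, e^w ∈ 𝔻\U} T(w) is at most 25 · Σ_{i∈I} area(T(w_i)). -/
open Complex Metric Set MeasureTheory

noncomputable section

/-- The closed right isosceles triangle with right-angle vertex `w`, hypotenuse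
on the imaginary axis. -/
def Tri (w : ℂ) : Set ℂ := {z : ℂ | z.re ≤ 0 ∧ |z.im - w.im| ≤ z.re - w.re}

/-- Area of a subset of `ℂ` measured in the quotient `ℂ / 2πiℤ`. -/
def quotArea (S : Set ℂ) : ENNReal :=
  MeasureTheory.volume
    ((⋃ k : ℤ, (fun z : ℂ => z + 2 * Real.pi * Complex.I * k) '' S) ∩
      {z : ℂ | 0 ≤ z.im ∧ z.im < 2 * Real.pi})

/-- Disjointness of two subsets of `ℂ` viewed in the quotient `ℂ / 2πiℤ`. -/
def QuotDisjoint (S₁ S₂ : Set ℂ) : Prop :=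
  Disjoint (⋃ k : ℤ, (fun z : ℂ => z + 2 * Real.pi * Complex.I * k) '' S₁) S₂

/-!
The Vitali covering argument, with triangles in place of balls. Two triangles `Tri a` and `Tri b`
whose images in `ℂ / 2πiℤ` meet have, after a translation by a period, vertices satisfying
`|Im a - Im b| ≤ |Re a| + |Re b|`. So if `|Re a| ≤ τ |Re b|`, then `Tri a` lies, up to a period, in
the enlargement of `Tri b` with the same `Im` and height `(1 + 2τ) |Re b|`, whose area is
`(1 + 2τ)²` times larger. A disjoint subfamily chosen greedily by height, up to the factor `τ`,
therefore captures all the triangles after enlargement; `τ = 2` gives the constant `25`. The greedy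
choice needs bounded heights, and the disc of radius `e^{-π}` inside `U` bounds them by `π`.
-/

section Triangles

variable {v w : ℂ}

lemma Tri_subset_Tri (h : |v.im - w.im| ≤ v.re - w.re) : Tri v ⊆ Tri w := by
  rintro z ⟨hz₀, hz⟩
  exact ⟨hz₀, by linarith [abs_sub_le z.im v.im w.im]⟩

lemma abs_im_sub_im_le_of_Tri_inter_Tri_nonempty (h : (Tri v ∩ Tri w).Nonempty) :
    |v.im - w.im| ≤ -v.re - w.re := by
  obtain ⟨z, ⟨hz₀, hzv⟩, -, hzw⟩ := h
  linarith [abs_sub_le v.im z.im w.im, abs_sub_comm z.im v.im]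

lemma Tri_subset_Tri_enlargement {τ : ℝ} (hmeet : (Tri v ∩ Tri w).Nonempty)
    (hvw : -v.re ≤ τ * -w.re) : Tri v ⊆ Tri ⟨(1 + 2 * τ) * w.re, w.im⟩ := by
  have him := abs_im_sub_im_le_of_Tri_inter_Tri_nonempty hmeet
  exact Tri_subset_Tri (by dsimp only; linarith)

lemma self_mem_Tri (hw : w.re ≤ 0) : w ∈ Tri w := ⟨hw, by simp⟩

lemma add_mem_Tri_add {z p : ℂ} (hp : p.re = 0) (hz : z ∈ Tri w) : z + p ∈ Tri (w + p) := by
  simpa [Tri, hp] using hz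

lemma measurableSet_Tri (w : ℂ) : MeasurableSet (Tri w) := by
  have hcone : MeasurableSet {z : ℂ | |z.im - w.im| ≤ z.re - w.re} :=
    measurableSet_le (by fun_prop) (by fun_prop)
  exact (measurableSet_le measurable_re measurable_const).inter hcone

lemma setOf_mk_mem_Tri {x : ℝ} (hx : x ≤ 0) :
    {y : ℝ | (⟨x, y⟩ : ℂ) ∈ Tri w} = Metric.closedBall w.im (x - w.re) := by
  ext y
  simp [Tri, hx, Real.dist_eq]

lemma volume_setOf_mk_mem_Tri (w : ℂ) (x : ℝ) :
    volume {y : ℝ | (⟨x, y⟩ : ℂ) ∈ Tri w} =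
      (Icc w.re 0).indicator (fun x ↦ ENNReal.ofReal (2 * (x - w.re))) x := by
  rcases lt_or_ge 0 x with hx | hx
  · simp [Tri, hx.not_ge]
  · rw [setOf_mk_mem_Tri hx, Real.volume_closedBall]
    rcases lt_or_ge x w.re with hxw | hxw
    · simpa [hxw.not_ge] using hxw.le
    · simp [hx, hxw]

lemma setLIntegral_Icc_two_mul_sub {a b : ℝ} (hab : a ≤ b) :
    ∫⁻ x in Icc a b, ENNReal.ofReal (2 * (x - a)) = ENNReal.ofReal ((b - a) ^ 2) := by
  have hint : ∫ x in a..b, 2 * (x - a) = (b - a) ^ 2 := by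
    rw [intervalIntegral.integral_const_mul,
      intervalIntegral.integral_comp_sub_right (fun x ↦ x), integral_id]
    ring
  have hnonneg : ∀ᵐ x ∂volume.restrict (Icc a b), 0 ≤ 2 * (x - a) :=
    (ae_restrict_mem measurableSet_Icc).mono fun x hx ↦ by linarith [hx.1]
  rw [← hint, intervalIntegral.integral_of_le hab, ← integral_Icc_eq_integral_Ioc,
    ofReal_integral_eq_lintegral_ofReal _ hnonneg]
  exact (by fun_prop : Continuous fun x : ℝ ↦ 2 * (x - a)).integrableOn_Icc

lemma volume_Tri (hw : w.re ≤ 0) : volume (Tri w) = ENNReal.ofReal (w.re ^ 2) := by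
  have hslice (x : ℝ) : Prod.mk x ⁻¹' (measurableEquivRealProd.symm ⁻¹' Tri w) =
      {y : ℝ | (⟨x, y⟩ : ℂ) ∈ Tri w} := rfl
  rw [← volume_preserving_equiv_real_prod.symm.measure_preimage_equiv, Measure.volume_eq_prod,
    Measure.prod_apply (measurableEquivRealProd.symm.measurable (measurableSet_Tri w))]
  simp_rw [hslice, volume_setOf_mk_mem_Tri]
  rw [lintegral_indicator measurableSet_Icc, setLIntegral_Icc_two_mul_sub hw, zero_sub, neg_sq]

lemma countable_of_pairwiseDisjoint_Tri {S : Set ℂ} (hneg : ∀ w ∈ S, w.re < 0)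
    (hdisj : S.PairwiseDisjoint Tri) : S.Countable := by
  have hpos (w : S) : 0 < volume (Tri w) := by
    rw [volume_Tri (hneg w w.2).le]
    exact ENNReal.ofReal_pos.2 (sq_pos_of_neg (hneg w w.2))
  have hcount := Measure.countable_meas_pos_of_disjoint_iUnion (μ := volume)
    (fun w : S ↦ measurableSet_Tri w) fun v w hvw ↦
      hdisj v.2 w.2 (Subtype.coe_injective.ne hvw)
  simpa only [hpos, ofPred_true, countable_univ_iff, countable_coe_iff] using hcount

end Triangles

section Quotient

lemma isAddFundamentalDomain_im_preimage_Ico {T : ℝ} (hT : 0 < T) (t : ℝ) (μ : Measure ℂ) :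
    IsAddFundamentalDomain (AddSubgroup.zmultiples (T * I : ℂ)) (im ⁻¹' Ico t (t + T)) μ := by
  refine IsAddFundamentalDomain.mk' (measurable_im measurableSet_Ico).nullMeasurableSet fun z ↦ ?_
  have hinj : Function.Injective fun n : ℤ ↦ n • (T * I : ℂ) :=
    smul_left_injective ℤ (by simp [hT.ne'])
  have hbij : Function.Bijective
      (codRestrict (fun n : ℤ ↦ n • (T * I : ℂ)) (AddSubgroup.zmultiples (T * I : ℂ)) _) :=
    (Equiv.ofInjective _ hinj).bijective
  refine hbij.existsUnique_iff.2 ?_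
  simpa [AddSubgroup.vadd_def, add_comm] using existsUnique_add_zsmul_mem_Ico hT z.im t

/-- The group `2πiℤ` of periods of `exp`, so that the quotient `ℂ / 2πiℤ` is `ℂ ⧸ expPeriods`. -/
abbrev expPeriods : AddSubgroup ℂ := AddSubgroup.zmultiples ((2 * Real.pi : ℝ) * I)

/-- The projection `ℂ → ℂ / 2πiℤ`, through which disjointness and area in the quotient become
statements about images of sets. -/
def expProj : ℂ → ℂ ⧸ expPeriods := QuotientAddGroup.mk

variable {S T : Set ℂ}

lemma re_eq_zero_of_mem_expPeriods {p : ℂ} (hp : p ∈ expPeriods) : p.re = 0 := by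
  obtain ⟨n, rfl⟩ := AddSubgroup.mem_zmultiples_iff.1 hp
  simp

lemma expProj_add_of_mem_expPeriods {p : ℂ} (hp : p ∈ expPeriods) (z : ℂ) :
    expProj (z + p) = expProj z :=
  QuotientAddGroup.mk_add_of_mem z hp

lemma sub_mem_expPeriods_of_expProj_eq {x y : ℂ} (h : expProj x = expProj y) :
    y - x ∈ expPeriods := by
  rw [sub_eq_neg_add]
  exact QuotientAddGroup.eq.1 h

lemma iUnion_image_add_eq_preimage_image_expProj (S : Set ℂ) :
    ⋃ k : ℤ, (fun z : ℂ ↦ z + 2 * Real.pi * I * k) '' S = expProj ⁻¹' (expProj '' S) := by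
  have hsurj : Function.Surjective fun k : ℤ ↦
      (⟨k • ((2 * Real.pi : ℝ) * I), k, rfl⟩ : expPeriods) := by
    rintro ⟨_, k, rfl⟩
    exact ⟨k, rfl⟩
  rw [expProj, QuotientAddGroup.preimage_image_mk_eq_iUnion_image]
  refine iUnion_congr_of_surjective _ hsurj fun k ↦ ?_
  simp [mul_comm]

lemma quotDisjoint_iff_disjoint_image_expProj :
    QuotDisjoint S T ↔ Disjoint (expProj '' S) (expProj '' T) := by
  rw [QuotDisjoint, iUnion_image_add_eq_preimage_image_expProj, disjoint_image_right]

lemma quotArea_eq_volume_preimage_image_expProj (S : Set ℂ) :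
    quotArea S = volume (expProj ⁻¹' (expProj '' S) ∩ im ⁻¹' Ico 0 (2 * Real.pi)) := by
  rw [quotArea, iUnion_image_add_eq_preimage_image_expProj]
  rfl

open scoped Pointwise in
lemma quotArea_le_volume (S : Set ℂ) : quotArea S ≤ volume S := by
  have hdom := isAddFundamentalDomain_im_preimage_Ico Real.two_pi_pos 0 volume
  rw [zero_add] at hdom
  rw [quotArea_eq_volume_preimage_image_expProj, expProj,
    QuotientAddGroup.preimage_image_mk_eq_iUnion_image, iUnion_inter, hdom.measure_eq_tsum S]
  refine (measure_iUnion_le _).trans_eq (tsum_congr fun p ↦ ?_)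
  have htranslate : (fun z ↦ z + (p : ℂ)) '' S = p +ᵥ S := image_congr fun z _ ↦ add_comm z p
  rw [htranslate]

lemma quotArea_le_tsum {ι : Type*} [Countable ι] {A : ι → Set ℂ}
    (h : expProj '' S ⊆ ⋃ i, expProj '' A i) : quotArea S ≤ ∑' i, quotArea (A i) := by
  simp_rw [quotArea_eq_volume_preimage_image_expProj]
  refine (measure_mono ?_).trans (measure_iUnion_le _)
  rw [← iUnion_inter, ← preimage_iUnion]
  exact inter_subset_inter_left _ (preimage_mono h)

end Quotient

section Covering

lemma image_expProj_Tri_subset_enlargement {a b : ℂ} {τ : ℝ}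
    (hmeet : (expProj '' Tri a ∩ expProj '' Tri b).Nonempty) (hab : -a.re ≤ τ * -b.re) :
    expProj '' Tri a ⊆ expProj '' Tri ⟨(1 + 2 * τ) * b.re, b.im⟩ := by
  obtain ⟨_, ⟨x, hx, rfl⟩, y, hy, hxy⟩ := hmeet
  have hp : y - x ∈ expPeriods := sub_mem_expPeriods_of_expProj_eq hxy.symm
  have hp₀ := re_eq_zero_of_mem_expPeriods hp
  have hmeet' : (Tri (a + (y - x)) ∩ Tri b).Nonempty :=
    ⟨y, by simpa using add_mem_Tri_add hp₀ hx, hy⟩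
  have hsub := Tri_subset_Tri_enlargement hmeet' (by simpa only [add_re, hp₀, add_zero] using hab)
  rintro _ ⟨z, hz, rfl⟩
  exact ⟨z + (y - x), hsub (add_mem_Tri_add hp₀ hz), expProj_add_of_mem_expPeriods hp z⟩

lemma exists_disjoint_subfamily_Tri_covering_enlargement {t : Set ℂ} (hneg : ∀ w ∈ t, w.re < 0)
    (hbdd : BddBelow (re '' t)) {τ : ℝ} (hτ : 1 < τ) :
    ∃ S ⊆ t, S.PairwiseDisjoint (fun w ↦ expProj '' Tri w) ∧
      ∀ a ∈ t, ∃ b ∈ S, expProj '' Tri a ⊆ expProj '' Tri ⟨(1 + 2 * τ) * b.re, b.im⟩ := by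
  obtain ⟨r, hr⟩ := hbdd
  obtain ⟨S, hSt, hdisj, hcover⟩ := Vitali.exists_disjoint_subfamily_covering_enlargement
    (fun w ↦ expProj '' Tri w) t (fun w ↦ -w.re) τ hτ
    (fun w hw ↦ neg_nonneg.2 (hneg w hw).le) (-r)
    (fun w hw ↦ neg_le_neg (hr (mem_image_of_mem re hw)))
    (fun w hw ↦ ⟨expProj w, mem_image_of_mem _ (self_mem_Tri (hneg w hw).le)⟩)
  refine ⟨S, hSt, hdisj, fun a ha ↦ ?_⟩
  obtain ⟨b, hb, hmeet, hab⟩ := hcover a ha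
  exact ⟨b, hb, image_expProj_Tri_subset_enlargement hmeet hab⟩

lemma quotArea_Tri_enlargement_le {w : ℂ} (hw : w.re ≤ 0) {c : ℝ} (hc : 0 ≤ c) :
    quotArea (Tri ⟨c * w.re, w.im⟩) ≤ ENNReal.ofReal (c ^ 2) * ENNReal.ofReal (w.re ^ 2) := by
  refine (quotArea_le_volume _).trans_eq ?_
  rw [volume_Tri (mul_nonpos_of_nonneg_of_nonpos hc hw), mul_pow,
    ENNReal.ofReal_mul (sq_nonneg c)]

end Covering

lemma exp_mem_ball_zero_exp_iff {w : ℂ} {r : ℝ} :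
    Complex.exp w ∈ Metric.ball 0 (Real.exp r) ↔ w.re < r := by
  rw [mem_ball_zero_iff, norm_exp, Real.exp_lt_exp]

lemma bddBelow_re_image_of_exp_notMem_ball {t : Set ℂ} {r : ℝ}
    (h : ∀ w ∈ t, Complex.exp w ∉ Metric.ball 0 (Real.exp r)) : BddBelow (re '' t) :=
  ⟨r, forall_mem_image.2 fun w hw ↦ not_lt.1 (exp_mem_ball_zero_exp_iff.not.1 (h w hw))⟩

theorem stmt5_general {t : Set ℂ} (hneg : ∀ w ∈ t, w.re < 0) (hbdd : BddBelow (re '' t))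
    {τ : ℝ} (hτ : 1 < τ) :
    ∃ S ⊆ t, S.Countable ∧ (S.Pairwise fun w₁ w₂ ↦ QuotDisjoint (Tri w₁) (Tri w₂)) ∧
      quotArea (⋃ w ∈ t, Tri w) ≤
        ENNReal.ofReal ((1 + 2 * τ) ^ 2) * ∑' w : S, ENNReal.ofReal ((w : ℂ).re ^ 2) := by
  obtain ⟨S, hSt, hdisj, hcover⟩ :=
    exists_disjoint_subfamily_Tri_covering_enlargement hneg hbdd hτ
  have hcount : S.Countable := countable_of_pairwiseDisjoint_Tri (fun w hw ↦ hneg w (hSt hw))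
    fun v hv w hw hvw ↦ (hdisj hv hw hvw).of_image
  have : Countable S := hcount.to_subtype
  refine ⟨S, hSt, hcount, fun v hv w hw hvw ↦
    quotDisjoint_iff_disjoint_image_expProj.2 (hdisj hv hw hvw), ?_⟩
  have hsub : expProj '' ⋃ w ∈ t, Tri w ⊆
      ⋃ b : S, expProj '' Tri ⟨(1 + 2 * τ) * (b : ℂ).re, (b : ℂ).im⟩ := by
    simp only [image_iUnion, iUnion_subset_iff]
    intro a ha
    obtain ⟨b, hb, hab⟩ := hcover a ha
    exact hab.trans (subset_iUnion_of_subset ⟨b, hb⟩ Subset.rfl)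
  rw [← ENNReal.tsum_mul_left]
  exact (quotArea_le_tsum hsub).trans <| ENNReal.tsum_le_tsum fun b ↦
    quotArea_Tri_enlargement_le (hneg b (hSt b.2)).le (by linarith)

/-- For every open `U ⊆ 𝔻` containing `B(0, e^{-π})` with `0 ∈ U`, there is a
countable family of points `wᵢ` with `Re wᵢ < 0`, `e^{wᵢ} ∈ 𝔻 \ U`, whose
triangles are pairwise disjoint in the quotient `ℂ/2πiℤ`, and such that the
quotient-area of `⋃_{Re w < 0, e^w ∈ 𝔻\U} T(w)` is at most
`25 Σᵢ area T(wᵢ)` (the Euclidean area of `T(w)` being `(Re w)²`). -/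
theorem stmt5 (U : Set ℂ) (hU : IsOpen U) (hUsub : U ⊆ Metric.ball 0 1)
    (h0 : (0 : ℂ) ∈ U) (hball : Metric.ball (0 : ℂ) (Real.exp (-Real.pi)) ⊆ U) :
    ∃ S : Set ℂ, S.Countable ∧
      (∀ w ∈ S, w.re < 0 ∧ Complex.exp w ∈ Metric.ball 0 1 \ U) ∧
      (S.Pairwise fun w₁ w₂ => QuotDisjoint (Tri w₁) (Tri w₂)) ∧
      quotArea (⋃ w ∈ {w : ℂ | w.re < 0 ∧ Complex.exp w ∈ Metric.ball 0 1 \ U}, Tri w)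
        ≤ 25 * ∑' w : S, ENNReal.ofReal ((w : ℂ).re ^ 2) := by
  obtain ⟨S, hSt, hcount, hdisj, harea⟩ := stmt5_general
    (t := {w : ℂ | w.re < 0 ∧ Complex.exp w ∈ Metric.ball 0 1 \ U}) (fun _ hw ↦ hw.1)
    (bddBelow_re_image_of_exp_notMem_ball fun _ hw h ↦ hw.2.2 (hball h)) one_lt_two
  exact ⟨S, hcount, hSt, hdisj, harea.trans_eq (by norm_num)⟩
end
end

section
/- Let W ⊊ ℂ be a connected, simply connected open set with 0 ∈ W. Let A and B be closed subsets of ℂ with 0 ∉ A and 0 ∉ B. Let U be the connected component of W \ A containing 0, U′ the connected component of W \ B containing 0, and U″ the connected component of W \ (A ∪ B) containing 0, and assume U and U′ are simply connected. Then for any biholomorphisms f_W : 𝔻 → W, f_A : 𝔻 → U, f_B : 𝔻 → U′, f_{AB} : 𝔻 → U″, all mapping 0 to 0, one has |f_{AB}′(0)| · |f_W′(0)| ≥ |f_A′(0)| · |f_B′(0)|. Equivalently, writing r(V) for the conformal radius of V at 0 and λ(A) = r(U)/r(W), λ(B) = r(U′)/r(W), λ(A∪B) = r(U″)/r(W), one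 has λ(A ∪ B) ≥ λ(A)·λ(B). -/
open Complex Metric Set

noncomputable section

/-! Let `φ`, `φ₁`, `φ₂`, `ψ` be the inverses of the Riemann maps onto `W`, `U`, `U'`, `U''`. All
four have a simple zero at `0`, and `φ₁`, `φ₂` vanish nowhere else, so `φ ψ / (φ₁ φ₂)` is
holomorphic on `U''`, with value `φ'(0) ψ'(0) / (φ₁'(0) φ₂'(0))` at `0`. The Schwarz lemma gives
`|φ| ≤ |φ₁|` on `U` and `|φ| ≤ |φ₂|` on `U'`, while near the boundary of `U''` one of `|φ₁|`,
`|φ₂|` is close to `1`. Hence the quotient is asymptotically bounded by `1` at the boundary, and by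
the maximum principle its value at `0` is at most `1` in modulus. -/

open Filter Topology

section ConnectedComponentIn

variable {X : Type*} [TopologicalSpace X]

lemma closure_connectedComponentIn_inter_subset (S : Set X) (x : X) :
    closure (connectedComponentIn S x) ∩ S ⊆ connectedComponentIn S x := by
  rintro y ⟨hy, hyS⟩
  have hx : x ∈ connectedComponentIn S x :=
    mem_connectedComponentIn <| connectedComponentIn_nonempty_iff.1 <|
      closure_nonempty_iff.1 ⟨y, hy⟩
  have hins : IsPreconnected (insert y (connectedComponentIn S x)) :=
    isPreconnected_connectedComponentIn.subset_closure (subset_insert _ _)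
      (insert_subset hy subset_closure)
  exact hins.subset_connectedComponentIn (mem_insert_of_mem _ hx)
    (insert_subset hyS (connectedComponentIn_subset S x)) (mem_insert _ _)

lemma connectedComponentIn_inter (S T : Set X) (x : X) :
    connectedComponentIn (S ∩ T) x =
      connectedComponentIn (connectedComponentIn S x ∩ connectedComponentIn T x) x := by
  refine Subset.antisymm (fun y hy ↦ ?_) <| connectedComponentIn_mono x <|
    inter_subset_inter (connectedComponentIn_subset S x) (connectedComponentIn_subset T x)
  have hx : x ∈ S ∩ T := connectedComponentIn_nonempty_iff.1 ⟨y, hy⟩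
  exact isPreconnected_connectedComponentIn.subset_connectedComponentIn
    (mem_connectedComponentIn hx) (subset_inter (connectedComponentIn_mono x inter_subset_left)
      (connectedComponentIn_mono x inter_subset_right)) hy

end ConnectedComponentIn

lemma not_eventually_eq_of_injOn {X Y : Type*} [TopologicalSpace X] {f : X → Y} {s : Set X} {x : X}
    [(𝓝[≠] x).NeBot] (hi : InjOn f s) (hs : s ∈ 𝓝 x) : ¬ ∀ᶠ z in 𝓝 x, f z = f x := by
  intro hconst
  have hfalse : ∀ᶠ _ in 𝓝[≠] x, False := by
    filter_upwards [nhdsWithin_le_nhds hconst, nhdsWithin_le_nhds hs, self_mem_nhdsWithin]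
      with z hz hzs hne using hne (hi hzs (mem_of_mem_nhds hs) hz)
  exact hfalse.exists.choose_spec

section Univalent

variable {f g : ℂ → ℂ} {s : Set ℂ} {x : ℂ}

lemma map_nhds_eq_of_injOn (hf : DifferentiableOn ℂ f s) (hi : InjOn f s) (hs : s ∈ 𝓝 x) :
    map f (𝓝 x) = 𝓝 (f x) :=
  le_antisymm (hf.differentiableAt hs).continuousAt <|
    (hf.analyticAt hs).eventually_constant_or_nhds_le_map_nhds_aux.resolve_left
      (not_eventually_eq_of_injOn hi hs)

lemma isOpen_image_of_injOn (hf : DifferentiableOn ℂ f s) (hi : InjOn f s) (hs : IsOpen s) :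
    IsOpen (f '' s) := by
  rw [isOpen_iff_mem_nhds]
  rintro _ ⟨x, hx, rfl⟩
  rw [← map_nhds_eq_of_injOn hf hi (hs.mem_nhds hx)]
  exact image_mem_map (hs.mem_nhds hx)

lemma eventually_deriv_ne_zero_of_injOn (hf : DifferentiableOn ℂ f s) (hi : InjOn f s)
    (hs : s ∈ 𝓝 x) : ∀ᶠ z in 𝓝[≠] x, deriv f z ≠ 0 := by
  refine (hf.analyticAt hs).deriv.eventually_eq_zero_or_eventually_ne_zero.resolve_left
    fun hzero ↦ not_eventually_eq_of_injOn hi hs ?_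
  obtain ⟨r, hr, hball⟩ := Metric.eventually_nhds_iff_ball.1 (hzero.and hs)
  filter_upwards [ball_mem_nhds x hr] with z hz
  exact isOpen_ball.is_const_of_deriv_eq_zero (convex_ball x r).isPreconnected
    (hf.mono fun y hy ↦ (hball y hy).2) (fun y hy ↦ (hball y hy).1) hz (mem_ball_self hr)

lemma continuousAt_of_leftInvOn (hf : DifferentiableOn ℂ f s) (hg : LeftInvOn g f s)
    (hs : s ∈ 𝓝 x) : ContinuousAt g (f x) := by
  rw [ContinuousAt, ← map_nhds_eq_of_injOn hf hg.injOn hs, tendsto_map'_iff,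
    hg (mem_of_mem_nhds hs)]
  exact tendsto_id.congr' (by filter_upwards [hs] with z hz using (hg hz).symm)

/- Away from the zeros of `deriv f`, which are isolated, the inverse function theorem applies; the
remaining points are removable singularities of `g`. -/
lemma differentiableOn_of_leftInvOn (hf : DifferentiableOn ℂ f s) (hg : LeftInvOn g f s)
    (hs : IsOpen s) : DifferentiableOn ℂ g (f '' s) := by
  have hgd : ∀ x ∈ s, deriv f x ≠ 0 → DifferentiableAt ℂ g (f x) := by
    intro x hx hne
    refine (HasDerivAt.of_local_left_inverse (f := f) (f' := deriv f x)
      (continuousAt_of_leftInvOn hf hg (hs.mem_nhds hx)) ?_ hne ?_).differentiableAt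
    · rw [hg hx]
      exact (hf.differentiableAt (hs.mem_nhds hx)).hasDerivAt
    · filter_upwards [(isOpen_image_of_injOn hf hg.injOn hs).mem_nhds (mem_image_of_mem f hx)]
      rintro _ ⟨z, hz, rfl⟩
      rw [hg hz]
  rintro _ ⟨x, hx, rfl⟩
  have hpunct : ∀ᶠ w in 𝓝[≠] (f x), DifferentiableAt ℂ g w := by
    rw [eventually_nhdsWithin_iff, ← map_nhds_eq_of_injOn hf hg.injOn (hs.mem_nhds hx),
      eventually_map]
    filter_upwards [hs.mem_nhds hx, eventually_nhdsWithin_iff.1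
      (eventually_deriv_ne_zero_of_injOn hf hg.injOn (hs.mem_nhds hx))] with z hz hne hfz
    exact hgd z hz (hne fun hzx ↦ hfz (congrArg f hzx))
  exact (analyticAt_of_differentiable_on_punctured_nhds_of_continuousAt hpunct
    (continuousAt_of_leftInvOn hf hg (hs.mem_nhds hx))).differentiableAt.differentiableWithinAt

lemma deriv_leftInv_mul_deriv (hf : DifferentiableOn ℂ f s) (hg : LeftInvOn g f s)
    (hs : IsOpen s) (hx : x ∈ s) : deriv g (f x) * deriv f x = 1 := by
  have hgx : HasDerivAt g (deriv g (f x)) (f x) :=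
    ((differentiableOn_of_leftInvOn hf hg hs).differentiableAt
      ((isOpen_image_of_injOn hf hg.injOn hs).mem_nhds (mem_image_of_mem f hx))).hasDerivAt
  have hfx : HasDerivAt f (deriv f x) x := (hf.differentiableAt (hs.mem_nhds hx)).hasDerivAt
  have hid : HasDerivAt (g ∘ f) 1 x := (hasDerivAt_id x).congr_of_eventuallyEq <| by
    filter_upwards [hs.mem_nhds hx] with z hz using hg hz
  exact (hgx.comp x hfx).unique hid

lemma dslope_ne_zero_of_injOn (hf : DifferentiableOn ℂ f s) (hi : InjOn f s) (hs : IsOpen s)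
    {y : ℂ} (hx : x ∈ s) (hy : y ∈ s) : dslope f x y ≠ 0 := by
  rcases eq_or_ne y x with rfl | hne
  · rw [dslope_same]
    exact right_ne_zero_of_mul_eq_one (deriv_leftInv_mul_deriv hf hi.leftInvOn_invFunOn hs hy)
  · rw [dslope_of_ne f hne, slope_def_field]
    exact div_ne_zero (sub_ne_zero.2 (hi.ne hy hx hne)) (sub_ne_zero.2 hne)

end Univalent

section DslopeQuotient

/-- The quotient `φ ψ / (φ₁ φ₂)` of four functions that vanish at `z₀`. It is written with
difference quotients so that it takes the right value at `z₀` too, where `φ ψ / (φ₁ φ₂)` would be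
`0 / 0 = 0`. -/
def dslopeQuotient (φ ψ φ₁ φ₂ : ℂ → ℂ) (z₀ z : ℂ) : ℂ :=
  dslope φ z₀ z * dslope ψ z₀ z / (dslope φ₁ z₀ z * dslope φ₂ z₀ z)

variable {φ ψ φ₁ φ₂ : ℂ → ℂ} {z₀ z : ℂ}

lemma dslopeQuotient_self (φ ψ φ₁ φ₂ : ℂ → ℂ) (z₀ : ℂ) :
    dslopeQuotient φ ψ φ₁ φ₂ z₀ z₀ = deriv φ z₀ * deriv ψ z₀ / (deriv φ₁ z₀ * deriv φ₂ z₀) := by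
  simp only [dslopeQuotient, dslope_same]

lemma dslopeQuotient_of_ne (hφ₀ : φ z₀ = 0) (hψ₀ : ψ z₀ = 0) (h₁₀ : φ₁ z₀ = 0) (h₂₀ : φ₂ z₀ = 0)
    (hz : z ≠ z₀) : dslopeQuotient φ ψ φ₁ φ₂ z₀ z = φ z * ψ z / (φ₁ z * φ₂ z) := by
  have hsub : z - z₀ ≠ 0 := sub_ne_zero.2 hz
  simp only [dslopeQuotient, dslope_of_ne _ hz, slope_def_field, hφ₀, hψ₀, h₁₀, h₂₀, sub_zero]
  rw [div_mul_div_comm, div_mul_div_comm, div_div_div_cancel_right₀ (mul_ne_zero hsub hsub)]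

lemma differentiableOn_dslopeQuotient {s : Set ℂ} (hs : IsOpen s) (hz₀ : z₀ ∈ s)
    (hφ : DifferentiableOn ℂ φ s) (hψ : DifferentiableOn ℂ ψ s)
    (hφ₁ : DifferentiableOn ℂ φ₁ s) (hi₁ : InjOn φ₁ s)
    (hφ₂ : DifferentiableOn ℂ φ₂ s) (hi₂ : InjOn φ₂ s) :
    DifferentiableOn ℂ (dslopeQuotient φ ψ φ₁ φ₂ z₀) s := by
  have hdslope {f : ℂ → ℂ} (hf : DifferentiableOn ℂ f s) : DifferentiableOn ℂ (dslope f z₀) s :=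
    (differentiableOn_dslope (hs.mem_nhds hz₀)).2 hf
  exact ((hdslope hφ).mul (hdslope hψ)).div ((hdslope hφ₁).mul (hdslope hφ₂)) fun z hz ↦
    mul_ne_zero (dslope_ne_zero_of_injOn hφ₁ hi₁ hs hz₀ hz)
      (dslope_ne_zero_of_injOn hφ₂ hi₂ hs hz₀ hz)

lemma norm_dslopeQuotient_le (hφ₀ : φ z₀ = 0) (hψ₀ : ψ z₀ = 0) (h₁₀ : φ₁ z₀ = 0)
    (h₂₀ : φ₂ z₀ = 0) (hφ₁ : ‖φ z‖ ≤ ‖φ₁ z‖) (hφ₂ : ‖φ z‖ ≤ ‖φ₂ z‖) (hψ : ‖ψ z‖ ≤ 1) {M : ℝ}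
    (hM : 0 < M) (hlarge : M⁻¹ < ‖φ₁ z‖ ∨ M⁻¹ < ‖φ₂ z‖) :
    ‖dslopeQuotient φ ψ φ₁ φ₂ z₀ z‖ ≤ M := by
  have hz : z ≠ z₀ := by
    rintro rfl
    rw [h₁₀, h₂₀, norm_zero, or_self] at hlarge
    exact (inv_pos.2 hM).not_gt hlarge
  rw [dslopeQuotient_of_ne hφ₀ hψ₀ h₁₀ h₂₀ hz, norm_div, norm_mul, norm_mul]
  refine div_le_of_le_mul₀ (by positivity) hM.le ?_
  rcases hlarge with hlarge | hlarge <;> rw [inv_lt_iff_one_lt_mul₀' hM] at hlarge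
  · calc ‖φ z‖ * ‖ψ z‖ ≤ ‖φ₂ z‖ * (M * ‖φ₁ z‖) := by gcongr; exact hψ.trans hlarge.le
      _ = M * (‖φ₁ z‖ * ‖φ₂ z‖) := by ring
  · calc ‖φ z‖ * ‖ψ z‖ ≤ ‖φ₁ z‖ * (M * ‖φ₂ z‖) := by gcongr; exact hψ.trans hlarge.le
      _ = M * (‖φ₁ z‖ * ‖φ₂ z‖) := by ring

end DslopeQuotient

/- The open set where `‖F‖ > M` has closure in `K`, so the maximum principle applies to it although
`U` may be unbounded and `F` need not extend to the boundary of `U`. -/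
lemma norm_le_of_forall_exists_isCompact {E G : Type*} [NormedAddCommGroup E] [NormedSpace ℂ E]
    [Nontrivial E] [NormedAddCommGroup G] [NormedSpace ℂ G] {F : E → G} {U : Set E} {C : ℝ}
    (hU : IsOpen U) (hF : DifferentiableOn ℂ F U)
    (hbd : ∀ M > C, ∃ K ⊆ U, IsCompact K ∧ ∀ z ∈ U \ K, ‖F z‖ ≤ M) {z : E} (hz : z ∈ U) :
    ‖F z‖ ≤ C := by
  refine le_of_forall_gt_imp_ge_of_dense fun M hM ↦ ?_
  obtain ⟨K, hKU, hK, hFK⟩ := hbd M hM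
  set O : Set E := U ∩ (fun w ↦ ‖F w‖) ⁻¹' Ioi M
  have hO : IsOpen O := hF.continuousOn.norm.isOpen_inter_preimage hU isOpen_Ioi
  have hOK : O ⊆ K := fun w hw ↦ by_contra fun hwK ↦ (hFK w ⟨hw.1, hwK⟩).not_gt hw.2
  have hclO : closure O ⊆ U := (closure_minimal hOK hK.isClosed).trans hKU
  by_contra! hMz
  refine hMz.not_ge <| norm_le_of_forall_mem_frontier_norm_le (hK.isBounded.subset hOK)
    (hF.mono hclO).diffContOnCl (fun w hw ↦ ?_) (subset_closure ⟨hz, hMz⟩)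
  rw [hO.frontier_eq] at hw
  exact not_lt.1 fun hMw ↦ hw.2 ⟨hclO hw.1, hMw⟩

/-- `f` restricts to a biholomorphism from the unit disc onto `U` that maps `0` to `z₀`. Holomorphy
of the inverse is automatic, see `IsRiemannMap.differentiableOn_discInv`. -/
structure IsRiemannMap (f : ℂ → ℂ) (U : Set ℂ) (z₀ : ℂ) : Prop where
  differentiableOn : DifferentiableOn ℂ f (ball 0 1)
  bijOn : BijOn f (ball 0 1) U
  map_zero : f 0 = z₀

/-- The inverse of a function injective on the unit disc, with arbitrary values outside the image
of the disc. -/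
def discInv (f : ℂ → ℂ) : ℂ → ℂ := Function.invFunOn f (ball 0 1)

namespace IsRiemannMap

section OneMap

variable {f : ℂ → ℂ} {U : Set ℂ} {z₀ : ℂ}

lemma isOpen (h : IsRiemannMap f U z₀) : IsOpen U :=
  h.bijOn.image_eq ▸ isOpen_image_of_injOn h.differentiableOn h.bijOn.injOn isOpen_ball

lemma mem_base (h : IsRiemannMap f U z₀) : z₀ ∈ U :=
  h.map_zero ▸ h.bijOn.mapsTo (mem_ball_self one_pos)

lemma invOn_discInv (h : IsRiemannMap f U z₀) : InvOn (discInv f) f (ball 0 1) U :=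
  h.bijOn.invOn_invFunOn

lemma bijOn_discInv (h : IsRiemannMap f U z₀) : BijOn (discInv f) U (ball 0 1) :=
  h.bijOn.symm h.invOn_discInv.symm

lemma discInv_base (h : IsRiemannMap f U z₀) : discInv f z₀ = 0 :=
  h.map_zero ▸ h.invOn_discInv.1 (mem_ball_self one_pos)

lemma differentiableOn_discInv (h : IsRiemannMap f U z₀) : DifferentiableOn ℂ (discInv f) U :=
  h.bijOn.image_eq ▸ differentiableOn_of_leftInvOn h.differentiableOn h.invOn_discInv.1 isOpen_ball

lemma deriv_discInv_mul_deriv (h : IsRiemannMap f U z₀) : deriv (discInv f) z₀ * deriv f 0 = 1 :=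
  h.map_zero ▸ deriv_leftInv_mul_deriv h.differentiableOn h.invOn_discInv.1 isOpen_ball
    (mem_ball_self one_pos)

lemma deriv_ne_zero (h : IsRiemannMap f U z₀) : deriv f 0 ≠ 0 :=
  right_ne_zero_of_mul_eq_one h.deriv_discInv_mul_deriv

lemma norm_deriv_discInv (h : IsRiemannMap f U z₀) : ‖deriv (discInv f) z₀‖ = ‖deriv f 0‖⁻¹ := by
  rw [← norm_inv, eq_inv_of_mul_eq_one_left h.deriv_discInv_mul_deriv]

lemma norm_le_norm_discInv (h : IsRiemannMap f U z₀) {φ : ℂ → ℂ} (hφ : DifferentiableOn ℂ φ U)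
    (hφ_maps : MapsTo φ U (closedBall 0 1)) (hφ₀ : φ z₀ = 0) {z : ℂ} (hz : z ∈ U) :
    ‖φ z‖ ≤ ‖discInv f z‖ := by
  have hschwarz := norm_le_norm_of_mapsTo_ball (hφ.comp h.differentiableOn h.bijOn.mapsTo)
    (hφ_maps.comp h.bijOn.mapsTo) (by rw [Function.comp_apply, h.map_zero, hφ₀])
    (mem_ball_zero_iff.1 (h.bijOn_discInv.mapsTo hz))
  rwa [Function.comp_apply, h.invOn_discInv.2 hz] at hschwarz

lemma isCompact_image_closedBall (h : IsRiemannMap f U z₀) {t : ℝ} (ht : t < 1) :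
    IsCompact (f '' closedBall 0 t) :=
  (isCompact_closedBall 0 t).image_of_continuousOn
    (h.differentiableOn.continuousOn.mono (closedBall_subset_ball ht))

lemma image_closedBall_subset (h : IsRiemannMap f U z₀) {t : ℝ} (ht : t < 1) :
    f '' closedBall 0 t ⊆ U :=
  (image_mono (closedBall_subset_ball ht)).trans h.bijOn.image_eq.subset

lemma lt_norm_discInv (h : IsRiemannMap f U z₀) {t : ℝ} {z : ℂ} (hz : z ∈ U)
    (hzt : z ∉ f '' closedBall 0 t) : t < ‖discInv f z‖ :=
  not_le.1 fun hle ↦ hzt ⟨discInv f z, mem_closedBall_zero_iff.2 hle, h.invOn_discInv.2 hz⟩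

end OneMap

end IsRiemannMap

section TwoMaps

variable {f₁ f₂ φ ψ : ℂ → ℂ} {U₁ U₂ : Set ℂ} {z₀ : ℂ}

lemma exists_isCompact_lt_norm_discInv (h₁ : IsRiemannMap f₁ U₁ z₀) (h₂ : IsRiemannMap f₂ U₂ z₀)
    {t : ℝ} (ht : t < 1) :
    ∃ K ⊆ connectedComponentIn (U₁ ∩ U₂) z₀, IsCompact K ∧
      ∀ z ∈ connectedComponentIn (U₁ ∩ U₂) z₀ \ K, t < ‖discInv f₁ z‖ ∨ t < ‖discInv f₂ z‖ := by
  set V := connectedComponentIn (U₁ ∩ U₂) z₀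
  refine ⟨closure V ∩ (f₁ '' closedBall 0 t ∩ f₂ '' closedBall 0 t), ?_, ?_, ?_⟩
  · exact (inter_subset_inter_right _ <| inter_subset_inter (h₁.image_closedBall_subset ht)
      (h₂.image_closedBall_subset ht)).trans (closure_connectedComponentIn_inter_subset _ _)
  · exact ((h₁.isCompact_image_closedBall ht).inter (h₂.isCompact_image_closedBall ht)).inter_left
      isClosed_closure
  · rintro z ⟨hzV, hzK⟩
    have hzU : z ∈ U₁ ∩ U₂ := connectedComponentIn_subset _ _ hzV
    by_cases hz₁ : z ∈ f₁ '' closedBall 0 t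
    · exact .inr <| h₂.lt_norm_discInv hzU.2 fun hz₂ ↦ hzK ⟨subset_closure hzV, hz₁, hz₂⟩
    · exact .inl <| h₁.lt_norm_discInv hzU.1 hz₁

lemma norm_deriv_mul_le_one_of_isRiemannMap (h₁ : IsRiemannMap f₁ U₁ z₀)
    (h₂ : IsRiemannMap f₂ U₂ z₀) (hφ : DifferentiableOn ℂ φ (U₁ ∪ U₂))
    (hφ_maps : MapsTo φ (U₁ ∪ U₂) (closedBall 0 1))
    (hφ₀ : φ z₀ = 0) (hψ : DifferentiableOn ℂ ψ (connectedComponentIn (U₁ ∩ U₂) z₀))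
    (hψ_maps : MapsTo ψ (connectedComponentIn (U₁ ∩ U₂) z₀) (closedBall 0 1)) (hψ₀ : ψ z₀ = 0) :
    ‖deriv f₁ 0‖ * ‖deriv f₂ 0‖ * (‖deriv φ z₀‖ * ‖deriv ψ z₀‖) ≤ 1 := by
  set V := connectedComponentIn (U₁ ∩ U₂) z₀
  have hV : V ⊆ U₁ ∩ U₂ := connectedComponentIn_subset _ _
  have hVo : IsOpen V := (h₁.isOpen.inter h₂.isOpen).connectedComponentIn
  have hz₀ : z₀ ∈ V := mem_connectedComponentIn ⟨h₁.mem_base, h₂.mem_base⟩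
  have hV₁ : V ⊆ U₁ := hV.trans inter_subset_left
  have hV₂ : V ⊆ U₂ := hV.trans inter_subset_right
  have hquot : DifferentiableOn ℂ (dslopeQuotient φ ψ (discInv f₁) (discInv f₂) z₀) V :=
    differentiableOn_dslopeQuotient hVo hz₀ (hφ.mono (hV₁.trans subset_union_left)) hψ
      (h₁.differentiableOn_discInv.mono hV₁) (h₁.bijOn_discInv.injOn.mono hV₁)
      (h₂.differentiableOn_discInv.mono hV₂) (h₂.bijOn_discInv.injOn.mono hV₂)
  have hφ₁ {z : ℂ} (hz : z ∈ V) : ‖φ z‖ ≤ ‖discInv f₁ z‖ :=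
    h₁.norm_le_norm_discInv (hφ.mono subset_union_left) (hφ_maps.mono_left subset_union_left)
      hφ₀ (hV₁ hz)
  have hφ₂ {z : ℂ} (hz : z ∈ V) : ‖φ z‖ ≤ ‖discInv f₂ z‖ :=
    h₂.norm_le_norm_discInv (hφ.mono subset_union_right) (hφ_maps.mono_left subset_union_right)
      hφ₀ (hV₂ hz)
  have hle : ‖dslopeQuotient φ ψ (discInv f₁) (discInv f₂) z₀ z₀‖ ≤ 1 := by
    refine norm_le_of_forall_exists_isCompact hVo hquot (fun M hM ↦ ?_) hz₀
    obtain ⟨K, hKV, hK, hlarge⟩ := exists_isCompact_lt_norm_discInv h₁ h₂ (inv_lt_one_of_one_lt₀ hM)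
    exact ⟨K, hKV, hK, fun z hz ↦ norm_dslopeQuotient_le hφ₀ hψ₀ h₁.discInv_base h₂.discInv_base
      (hφ₁ hz.1) (hφ₂ hz.1) (mem_closedBall_zero_iff.1 (hψ_maps hz.1)) (one_pos.trans hM)
      (hlarge z hz)⟩
  rw [dslopeQuotient_self, norm_div, norm_mul, norm_mul, h₁.norm_deriv_discInv,
    h₂.norm_deriv_discInv, ← mul_inv, div_inv_eq_mul] at hle
  rwa [mul_comm]

end TwoMaps

theorem stmt8_general {f₁ f₂ fW fV : ℂ → ℂ} {U₁ U₂ W : Set ℂ} {z₀ : ℂ}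
    (h₁ : IsRiemannMap f₁ U₁ z₀) (h₂ : IsRiemannMap f₂ U₂ z₀) (hU : U₁ ∪ U₂ ⊆ W)
    (hW : IsRiemannMap fW W z₀) (hV : IsRiemannMap fV (connectedComponentIn (U₁ ∩ U₂) z₀) z₀) :
    ‖deriv f₁ 0‖ * ‖deriv f₂ 0‖ ≤ ‖deriv fV 0‖ * ‖deriv fW 0‖ := by
  have hle := norm_deriv_mul_le_one_of_isRiemannMap h₁ h₂ (hW.differentiableOn_discInv.mono hU)
    ((hW.bijOn_discInv.mapsTo.mono_left hU).mono_right ball_subset_closedBall) hW.discInv_base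
    hV.differentiableOn_discInv (hV.bijOn_discInv.mapsTo.mono_right ball_subset_closedBall)
    hV.discInv_base
  have hpos : 0 < ‖deriv fV 0‖ * ‖deriv fW 0‖ :=
    mul_pos (norm_pos_iff.2 hV.deriv_ne_zero) (norm_pos_iff.2 hW.deriv_ne_zero)
  rwa [hW.norm_deriv_discInv, hV.norm_deriv_discInv, ← mul_inv_rev, ← div_eq_mul_inv,
    div_le_one hpos] at hle

/-- Let `W ⊊ ℂ` be a connected, simply connected open set with `0 ∈ W`, and let
`A`, `B` be closed sets avoiding `0`. Let `U`, `U'`, `U''` be the connected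
components containing `0` of `W \ A`, `W \ B`, `W \ (A ∪ B)` respectively, with
`U` and `U'` simply connected. Then for any biholomorphisms
`f_W : 𝔻 → W`, `f_A : 𝔻 → U`, `f_B : 𝔻 → U'`, `f_{AB} : 𝔻 → U''` fixing `0`,
one has `|f_{AB}'(0)|·|f_W'(0)| ≥ |f_A'(0)|·|f_B'(0)|`, i.e.
`λ(A ∪ B) ≥ λ(A)·λ(B)` for the relative conformal radii. -/
theorem stmt8 (W A B : Set ℂ) (hWo : IsOpen W) (hWc : IsConnected W)
    (hWsc : SimplyConnectedSpace W) (hWne : W ≠ Set.univ) (h0W : (0 : ℂ) ∈ W)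
    (hA : IsClosed A) (hB : IsClosed B) (h0A : (0 : ℂ) ∉ A) (h0B : (0 : ℂ) ∉ B)
    (hU : SimplyConnectedSpace (connectedComponentIn (W \ A) 0))
    (hU' : SimplyConnectedSpace (connectedComponentIn (W \ B) 0))
    (fW fA fB fAB : ℂ → ℂ)
    (hfW : DifferentiableOn ℂ fW (Metric.ball 0 1))
    (hfWb : Set.BijOn fW (Metric.ball 0 1) W) (hfW0 : fW 0 = 0)
    (hfA : DifferentiableOn ℂ fA (Metric.ball 0 1))
    (hfAb : Set.BijOn fA (Metric.ball 0 1) (connectedComponentIn (W \ A) 0))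
    (hfA0 : fA 0 = 0)
    (hfB : DifferentiableOn ℂ fB (Metric.ball 0 1))
    (hfBb : Set.BijOn fB (Metric.ball 0 1) (connectedComponentIn (W \ B) 0))
    (hfB0 : fB 0 = 0)
    (hfAB : DifferentiableOn ℂ fAB (Metric.ball 0 1))
    (hfABb : Set.BijOn fAB (Metric.ball 0 1) (connectedComponentIn (W \ (A ∪ B)) 0))
    (hfAB0 : fAB 0 = 0) :
    ‖deriv fAB 0‖ * ‖deriv fW 0‖ ≥
      ‖deriv fA 0‖ * ‖deriv fB 0‖ := by
  have hsub (S : Set ℂ) : connectedComponentIn (W \ S) 0 ⊆ W :=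
    (connectedComponentIn_subset _ _).trans sdiff_subset
  rw [← sdiff_inter_sdiff, connectedComponentIn_inter] at hfABb
  exact stmt8_general ⟨hfA, hfAb, hfA0⟩ ⟨hfB, hfBb, hfB0⟩
    (union_subset (hsub A) (hsub B)) ⟨hfW, hfWb, hfW0⟩ ⟨hfAB, hfABb, hfAB0⟩
end
end
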